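/- On F ⊗ F ⊗ F, the operators ξ₁ = (1−q²)⁻¹ (a⁺k⁻¹ ⊗ 1 ⊗ 1) and ξ₂ = (1−q²)⁻¹ (a⁻ ⊗ a⁺k⁻¹ ⊗ 1 + k ⊗ k⁻¹ ⊗ a⁺k⁻¹) satisfy the q-Serre relations of type A₂: ξ₁²ξ₂ − (q+q⁻¹) ξ₁ξ₂ξ₁ + ξ₂ξ₁² = 0 and ξ₂²ξ₁ − (q+q⁻¹) ξ₂ξ₁ξ₂ + ξ₁ξ₂² = 0. -/

import Mathlib

noncomputable section

/-- The base field `K = ℚ(q)`, rational functions over `ℚ`. -/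
abbrev K : Type := RatFunc ℚ

/-- The indeterminate `q`. -/
def q : K := RatFunc.X

/-- The Fock space `F` with basis `|m⟩, m ∈ ℕ`. -/
abbrev F : Type := ℕ →₀ K

/-- The basis vector `|m⟩`. -/
def ket (m : ℕ) : F := Finsupp.single m 1

/-- The operator `k : |m⟩ ↦ q^m |m⟩`. -/
def opK : Module.End K F := Finsupp.lift F K ℕ fun m => (q ^ m) • ket m

/-- The operator `a⁺ : |m⟩ ↦ |m+1⟩`. -/
def opAp : Module.End K F := Finsupp.lift F K ℕ fun m => ket (m + 1)

/-- The operator `a⁻ : |m⟩ ↦ (1 - q^{2m}) |m-1⟩` (so `a⁻|0⟩ = 0`). -/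
def opAm : Module.End K F := Finsupp.lift F K ℕ fun m => (1 - q ^ (2 * m)) • ket (m - 1)

/-- The inverse `k⁻¹ : |m⟩ ↦ q^{-m} |m⟩` of the operator `k`. -/
def opKInv : Module.End K F := Finsupp.lift F K ℕ fun m => (q ^ m)⁻¹ • ket m

/-- The `q`-integer `[m]₁ = (q^m - q^{-m})/(q - q⁻¹)`. -/
def qint (n : ℕ) : K := (q ^ n - q⁻¹ ^ n) / (q - q⁻¹)

open TensorProduct

/-- The triple tensor product `F ⊗ F ⊗ F`. -/
abbrev T3 : Type := F ⊗[K] (F ⊗[K] F)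

instance : AddCommGroup T3 := by
  exact @TensorProduct.addCommGroup K _ F (F ⊗[K] F) _ _ _ _

/-- `f ⊗ g ⊗ h` as an operator on `F ⊗ F ⊗ F`. -/
def tens3 (f g h : Module.End K F) : Module.End K T3 :=
  TensorProduct.map f (TensorProduct.map g h)

/-- The operator `ξ₁ = (1−q²)⁻¹ (a⁺k⁻¹ ⊗ 1 ⊗ 1)`. -/
def xi1 : Module.End K T3 := (1 - q ^ 2)⁻¹ • tens3 (opAp * opKInv) 1 1

/-- The operator `ξ₂ = (1−q²)⁻¹ (a⁻ ⊗ a⁺k⁻¹ ⊗ 1 + k ⊗ k⁻¹ ⊗ a⁺k⁻¹)`. -/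
def xi2 : Module.End K T3 :=
  (1 - q ^ 2)⁻¹ • (tens3 opAm (opAp * opKInv) 1 + tens3 opK opKInv (opAp * opKInv))


theorem q_ne : q ≠ 0 := RatFunc.X_ne_zero

/-- basis vectors of the triple tensor product -/
def ket3 (a b c : ℕ) : T3 := ket a ⊗ₜ[K] (ket b ⊗ₜ[K] ket c)

theorem opK_ket (m : ℕ) : opK (ket m) = (q ^ m) • ket m := by
  unfold opK
  rw [Finsupp.lift_apply]
  conv_lhs => arg 1; rw [ket]
  rw [Finsupp.sum_single_index]
  · exact one_smul K _
  · exact zero_smul K _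

theorem opAp_ket (m : ℕ) : opAp (ket m) = ket (m + 1) := by
  unfold opAp
  rw [Finsupp.lift_apply]
  conv_lhs => arg 1; rw [ket]
  rw [Finsupp.sum_single_index]
  · exact one_smul K _
  · exact zero_smul K _

theorem opAm_ket (m : ℕ) : opAm (ket m) = (1 - q ^ (2 * m)) • ket (m - 1) := by
  unfold opAm
  rw [Finsupp.lift_apply]
  conv_lhs => arg 1; rw [ket]
  rw [Finsupp.sum_single_index]
  · exact one_smul K _
  · exact zero_smul K _

theorem opKInv_ket (m : ℕ) : opKInv (ket m) = (q ^ m)⁻¹ • ket m := by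
  unfold opKInv
  rw [Finsupp.lift_apply]
  conv_lhs => arg 1; rw [ket]
  rw [Finsupp.sum_single_index]
  · exact one_smul K _
  · exact zero_smul K _

theorem xi1_ket (a b c : ℕ) :
    xi1 (ket3 a b c) = ((1 - q ^ 2)⁻¹ * (q ^ a)⁻¹) • ket3 (a + 1) b c := by
  simp only [xi1, tens3, ket3, LinearMap.smul_apply, TensorProduct.map_tmul, Module.End.mul_apply,
    opKInv_ket, map_smul, opAp_ket, Module.End.one_apply, TensorProduct.smul_tmul', smul_smul]

theorem xi2_ket (a b c : ℕ) :
    xi2 (ket3 a b c) = ((1 - q ^ 2)⁻¹ * ((1 - q ^ (2 * a)) * (q ^ b)⁻¹)) • ket3 (a - 1) (b + 1) c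
      + ((1 - q ^ 2)⁻¹ * (q ^ a * (q ^ b)⁻¹ * (q ^ c)⁻¹)) • ket3 a b (c + 1) := by
  simp only [xi2, tens3, ket3, LinearMap.smul_apply, LinearMap.add_apply, TensorProduct.map_tmul,
    Module.End.mul_apply, opKInv_ket, map_smul, opAp_ket, opAm_ket, opK_ket, Module.End.one_apply,
    TensorProduct.tmul_smul, ← TensorProduct.smul_tmul', smul_smul, smul_add]
  congr 2 <;> ring

theorem end_ext {f : Module.End K T3} (h : ∀ a b c, f (ket3 a b c) = 0) : f = 0 := by
  ext a b c
  simpa [ket3, ket] using h a b c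

theorem serre_gen {k M : Type*} [Field k] [AddCommGroup M] [Module k M]
    (q : k) (hq : q ≠ 0) (x y : Module.End k M)
    (e : ℕ → ℕ → ℕ → M)
    (h1 : ∀ a b c, x (e a b c) = ((1 - q ^ 2)⁻¹ * (q ^ a)⁻¹) • e (a + 1) b c)
    (h2 : ∀ a b c, y (e a b c) =
      ((1 - q ^ 2)⁻¹ * ((1 - q ^ (2 * a)) * (q ^ b)⁻¹)) • e (a - 1) (b + 1) c
      + ((1 - q ^ 2)⁻¹ * (q ^ a * (q ^ b)⁻¹ * (q ^ c)⁻¹)) • e a b (c + 1)) (a b c : ℕ) :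
    (x ^ 2 * y - (q + q⁻¹) • (x * y * x) + y * x ^ 2) (e a b c) = 0 ∧
    (y ^ 2 * x - (q + q⁻¹) • (y * x * y) + x * y ^ 2) (e a b c) = 0 := by
  have hp : ∀ z : Module.End k M, z ^ 2 = z * z := fun z => pow_two z
  constructor
  · simp only [LinearMap.add_apply, LinearMap.sub_apply, LinearMap.smul_apply, hp,
      Module.End.mul_apply, h1, h2, map_add, map_smul]
    generalize (1 - q ^ 2)⁻¹ = s
    rcases a with _ | a
    · simp only [Nat.add_sub_cancel, Nat.zero_add, Nat.zero_sub, Nat.reduceAdd, Nat.reduceSub]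
      match_scalars <;> field_simp <;> ring
    · simp only [Nat.add_sub_cancel]
      match_scalars <;> field_simp <;> ring
  · simp only [LinearMap.add_apply, LinearMap.sub_apply, LinearMap.smul_apply, hp,
      Module.End.mul_apply, h1, h2, map_add, map_smul]
    generalize (1 - q ^ 2)⁻¹ = s
    rcases a with _ | _ | a
    · simp only [Nat.add_sub_cancel, Nat.zero_add, Nat.zero_sub, Nat.reduceAdd, Nat.reduceSub]
      match_scalars <;> field_simp <;> ring
    · simp only [Nat.add_sub_cancel, Nat.zero_add, Nat.zero_sub, Nat.reduceAdd, Nat.reduceSub]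
      match_scalars <;> field_simp <;> ring
    · simp only [Nat.add_sub_cancel]
      match_scalars <;> field_simp <;> ring

/-- `ξ₁, ξ₂` satisfy the `q`-Serre relations of type `A₂`. -/
theorem statement10 :
    xi1 ^ 2 * xi2 - (q + q⁻¹) • (xi1 * xi2 * xi1) + xi2 * xi1 ^ 2 = 0 ∧
    xi2 ^ 2 * xi1 - (q + q⁻¹) • (xi2 * xi1 * xi2) + xi1 * xi2 ^ 2 = 0 := by
  exact ⟨end_ext fun a b c => (serre_gen q q_ne xi1 xi2 ket3 xi1_ket xi2_ket a b c).1,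
    end_ext fun a b c => (serre_gen q q_ne xi1 xi2 ket3 xi1_ket xi2_ket a b c).2⟩
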